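/- arXiv:2412.07500 — 4 statements merged into one kernel-verified Lean document; each statement's English description precedes it below -/
import Mathlib

section
/- Let r > 0 and λ ≥ 1. If v ∈ C⁴([−r,r]) is even (v(−x) = v(x)) and satisfies v⁗(x) + 2v''(x) + λ·v(x) = 0 for all x ∈ (−r,r) together with v(r) = v(−r) = v'(r) = v'(−r) = 0, then v ≡ 0 on [−r,r]. -/
open Real Set

/-!
Pairing the equation `v⁗ + 2pv'' + qv = 0` with `v` shows that
`⟪v, v'''⟫ - ⟪v', v''⟫` has derivative `-(‖v'' + pv‖² + (q - p²)‖v‖²)`, which is nonpositive when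
`p² ≤ q`. Clamped boundary conditions make the function vanish at both ends, so its derivative is
identically zero and `v'' = -pv`. A solution of this second-order equation with zero Cauchy data at
an endpoint is zero.
-/

theorem hasDerivWithinAt_iteratedDerivWithin {𝕜 F : Type*} [NontriviallyNormedField 𝕜]
    [NormedAddCommGroup F] [NormedSpace 𝕜 F] {n : WithTop ℕ∞} {m : ℕ} {f : 𝕜 → F} {s : Set 𝕜}
    {x : 𝕜} (hf : ContDiffOn 𝕜 n f s) (hs : UniqueDiffOn 𝕜 s) (hmn : m < n) (hx : x ∈ s) :
    HasDerivWithinAt (iteratedDerivWithin m f s) (iteratedDerivWithin (m + 1) f s x) s x := by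
  rw [iteratedDerivWithin_succ]
  exact (hf.differentiableOn_iteratedDerivWithin hmn hs x hx).hasDerivWithinAt

theorem deriv_eq_zero_of_nonpos_of_endpoints_eq {a b : ℝ} {f f' : ℝ → ℝ}
    (hf : ContinuousOn f (Icc a b)) (hf' : ∀ x ∈ Ioo a b, HasDerivAt f (f' x) x)
    (hf'_nonpos : ∀ x ∈ Ioo a b, f' x ≤ 0) (hab : f a = f b) : ∀ x ∈ Ioo a b, f' x = 0 := by
  intro x hx
  have hle : a ≤ b := (hx.1.trans hx.2).le
  have hanti : AntitoneOn f (Icc a b) := by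
    refine antitoneOn_of_hasDerivWithinAt_nonpos (f' := f') (convex_Icc a b) hf ?_ ?_ <;>
      rw [interior_Icc]
    · exact fun y hy ↦ (hf' y hy).hasDerivWithinAt
    · exact hf'_nonpos
  have hconst : ∀ y ∈ Icc a b, f y = f a := fun y hy ↦
    (hanti (left_mem_Icc.2 hle) hy hy.1).antisymm
      (hab.trans_le (hanti hy (right_mem_Icc.2 hle) hy.2))
  refine (hf' x hx).unique ((hasDerivAt_const x (f a)).congr_of_eventuallyEq ?_)
  exact Filter.eventually_of_mem (Icc_mem_nhds hx.1 hx.2) hconst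

theorem eqOn_zero_of_norm_iteratedDerivWithin_two_le {E : Type*} [NormedAddCommGroup E]
    [NormedSpace ℝ E] {a b K : ℝ} {v : ℝ → E} (hab : a < b) (hv : ContDiffOn ℝ 2 v (Icc a b))
    (hbound : ∀ x ∈ Ioo a b, ‖iteratedDerivWithin 2 v (Icc a b) x‖ ≤ K * ‖v x‖)
    (hva : v a = 0) (hva' : derivWithin v (Icc a b) a = 0) : EqOn v 0 (Icc a b) := by
  have hs : UniqueDiffOn ℝ (Icc a b) := uniqueDiffOn_Icc hab
  have hbound_Icc : ∀ x ∈ Icc a b, ‖iteratedDerivWithin 2 v (Icc a b) x‖ ≤ K * ‖v x‖ := by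
    have hcont := (hv.continuousOn_iteratedDerivWithin le_rfl hs).norm
    have hcont' := hv.continuousOn.norm.const_mul K
    have hclosure : closure (Ioo a b) = Icc a b := closure_Ioo hab.ne
    exact fun x hx ↦ le_on_closure hbound (by rwa [hclosure]) (by rwa [hclosure])
      (by rwa [hclosure])
  have hderiv : ∀ x ∈ Icc a b, HasDerivWithinAt (fun y ↦ (v y, derivWithin v (Icc a b) y))
      (derivWithin v (Icc a b) x, iteratedDerivWithin 2 v (Icc a b) x) (Icc a b) x := by
    intro x hx
    have h₀ := hasDerivWithinAt_iteratedDerivWithin (m := 0) hv hs (by norm_num) hx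
    have h₁ := hasDerivWithinAt_iteratedDerivWithin (m := 1) hv hs (by norm_num) hx
    simp only [iteratedDerivWithin_zero, iteratedDerivWithin_one, zero_add] at h₀ h₁
    exact h₀.prodMk h₁
  have hgrowth : ∀ x ∈ Icc a b,
      ‖(derivWithin v (Icc a b) x, iteratedDerivWithin 2 v (Icc a b) x)‖ ≤
        max 1 K * ‖(v x, derivWithin v (Icc a b) x)‖ := by
    intro x hx
    rw [Prod.norm_mk, Prod.norm_mk]
    refine max_le ?_ ((hbound_Icc x hx).trans ?_)
    · exact (le_max_right _ _).trans (le_mul_of_one_le_left (by positivity) (le_max_left _ _))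
    · gcongr <;> simp
  have hzero := eq_zero_of_abs_deriv_le_mul_abs_self_of_eq_zero_right
    (fun x hx ↦ (hderiv x hx).continuousWithinAt)
    (fun x hx ↦ (hderiv x (Ico_subset_Icc_self hx)).mono_of_mem_nhdsWithin
      (Icc_mem_nhdsGE_of_mem hx))
    (Prod.ext hva hva') (fun x hx ↦ hgrowth x (Ico_subset_Icc_self hx))
  exact fun x hx ↦ congrArg Prod.fst (hzero x hx)

section FourthOrder

open scoped InnerProductSpace

variable {E : Type*} [NormedAddCommGroup E] [InnerProductSpace ℝ E]

/-- The boundary term `⟪v, v'''⟫ - ⟪v', v''⟫` left after integrating `⟪v, v⁗⟫` by parts twice.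
All derivatives are taken within `s`, so that the term makes sense at the endpoints of an
interval. -/
noncomputable def greenBoundaryTerm (v : ℝ → E) (s : Set ℝ) (x : ℝ) : ℝ :=
  ⟪v x, iteratedDerivWithin 3 v s x⟫_ℝ - ⟪derivWithin v s x, iteratedDerivWithin 2 v s x⟫_ℝ

theorem greenBoundaryTerm_eq_zero {v : ℝ → E} {s : Set ℝ} {x : ℝ} (hv : v x = 0)
    (hv' : derivWithin v s x = 0) : greenBoundaryTerm v s x = 0 := by
  simp [greenBoundaryTerm, hv, hv']

theorem hasDerivWithinAt_greenBoundaryTerm {v : ℝ → E} {s : Set ℝ} {x : ℝ}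
    (hv : ContDiffOn ℝ 4 v s) (hs : UniqueDiffOn ℝ s) (hx : x ∈ s) :
    HasDerivWithinAt (greenBoundaryTerm v s)
      (⟪v x, iteratedDerivWithin 4 v s x⟫_ℝ - ‖iteratedDerivWithin 2 v s x‖ ^ 2) s x := by
  have h₀ := hasDerivWithinAt_iteratedDerivWithin (m := 0) hv hs (by norm_num) hx
  have h₁ := hasDerivWithinAt_iteratedDerivWithin (m := 1) hv hs (by norm_num) hx
  have h₂ := hasDerivWithinAt_iteratedDerivWithin (m := 2) hv hs (by norm_num) hx
  have h₃ := hasDerivWithinAt_iteratedDerivWithin (m := 3) hv hs (by norm_num) hx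
  simp only [iteratedDerivWithin_zero, iteratedDerivWithin_one, Nat.reduceAdd] at h₀ h₁ h₂ h₃
  refine ((h₀.inner ℝ h₃).sub (h₁.inner ℝ h₂)).congr_deriv ?_
  rw [real_inner_self_eq_norm_sq]
  ring

theorem inner_sub_norm_sq_eq_neg_of_add_smul_add_smul_eq_zero {p q : ℝ} {v₀ v₂ v₄ : E}
    (h : v₄ + (2 * p) • v₂ + q • v₀ = 0) :
    ⟪v₀, v₄⟫_ℝ - ‖v₂‖ ^ 2 = -(‖v₂ + p • v₀‖ ^ 2 + (q - p ^ 2) * ‖v₀‖ ^ 2) := by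
  have hpair := congrArg (fun w ↦ ⟪v₀, w⟫_ℝ) h
  have hsq : ‖v₂ + p • v₀‖ ^ 2 = ‖v₂‖ ^ 2 + 2 * p * ⟪v₀, v₂⟫_ℝ + p ^ 2 * ‖v₀‖ ^ 2 := by
    rw [norm_add_sq_real, norm_smul, mul_pow, norm_eq_abs, sq_abs, inner_smul_right,
      real_inner_comm]
    ring
  simp only [inner_add_right, inner_smul_right, real_inner_self_eq_norm_sq,
    inner_zero_right] at hpair
  rw [hsq]
  linear_combination hpair

variable {a b : ℝ} {p q : ℝ → ℝ} {v : ℝ → E}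

theorem iteratedDerivWithin_two_add_smul_eq_zero (hab : a < b) (hv : ContDiffOn ℝ 4 v (Icc a b))
    (hpq : ∀ x ∈ Ioo a b, p x ^ 2 ≤ q x)
    (hode : ∀ x ∈ Ioo a b, iteratedDerivWithin 4 v (Icc a b) x +
      (2 * p x) • iteratedDerivWithin 2 v (Icc a b) x + q x • v x = 0)
    (hends : greenBoundaryTerm v (Icc a b) a = greenBoundaryTerm v (Icc a b) b) :
    ∀ x ∈ Ioo a b, iteratedDerivWithin 2 v (Icc a b) x + p x • v x = 0 := by
  have hderiv (x : ℝ) (hx : x ∈ Icc a b) :=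
    hasDerivWithinAt_greenBoundaryTerm hv (uniqueDiffOn_Icc hab) hx
  have hpotential : ∀ x ∈ Ioo a b, 0 ≤ (q x - p x ^ 2) * ‖v x‖ ^ 2 := fun x hx ↦
    mul_nonneg (sub_nonneg.2 (hpq x hx)) (sq_nonneg _)
  have hdissipation : ∀ x ∈ Ioo a b, -(‖iteratedDerivWithin 2 v (Icc a b) x + p x • v x‖ ^ 2 +
      (q x - p x ^ 2) * ‖v x‖ ^ 2) = 0 := by
    refine deriv_eq_zero_of_nonpos_of_endpoints_eq
      (fun x hx ↦ (hderiv x hx).continuousWithinAt) (fun x hx ↦ ?_) (fun x hx ↦ ?_) hends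
    · rw [← inner_sub_norm_sq_eq_neg_of_add_smul_add_smul_eq_zero (hode x hx)]
      exact (hderiv x (Ioo_subset_Icc_self hx)).hasDerivAt (Icc_mem_nhds hx.1 hx.2)
    · exact neg_nonpos.2 (add_nonneg (sq_nonneg _) (hpotential x hx))
  intro x hx
  have hsum := neg_eq_zero.1 (hdissipation x hx)
  have hsq := ((add_eq_zero_iff_of_nonneg (sq_nonneg _) (hpotential x hx)).1 hsum).1
  exact norm_eq_zero.1 (sq_eq_zero_iff.1 hsq)

theorem even_dirichlet_trivial_of_one_le_general {K : ℝ} (hab : a < b)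
    (hv : ContDiffOn ℝ 4 v (Icc a b)) (hp : ∀ x ∈ Ioo a b, |p x| ≤ K)
    (hpq : ∀ x ∈ Ioo a b, p x ^ 2 ≤ q x)
    (hode : ∀ x ∈ Ioo a b,
      iteratedDeriv 4 v x + (2 * p x) • iteratedDeriv 2 v x + q x • v x = 0)
    (hva : v a = 0) (hvb : v b = 0) (hva' : derivWithin v (Icc a b) a = 0)
    (hvb' : derivWithin v (Icc a b) b = 0) : EqOn v 0 (Icc a b) := by
  have hwithin : ∀ k : ℕ, k ≤ 4 → ∀ x ∈ Ioo a b,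
      iteratedDerivWithin k v (Icc a b) x = iteratedDeriv k v x := fun k hk x hx ↦
    iteratedDerivWithin_eq_iteratedDeriv (uniqueDiffOn_Icc hab)
      ((hv.contDiffAt (Icc_mem_nhds hx.1 hx.2)).of_le (by exact_mod_cast hk))
      (Ioo_subset_Icc_self hx)
  have hsecond := iteratedDerivWithin_two_add_smul_eq_zero hab hv hpq
    (fun x hx ↦ by
      rw [hwithin 4 le_rfl x hx, hwithin 2 (by norm_num) x hx]
      exact hode x hx)
    ((greenBoundaryTerm_eq_zero hva hva').trans (greenBoundaryTerm_eq_zero hvb hvb').symm)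
  refine eqOn_zero_of_norm_iteratedDerivWithin_two_le (K := K) hab (hv.of_le (by norm_num))
    (fun x hx ↦ ?_) hva hva'
  rw [eq_neg_of_add_eq_zero_left (hsecond x hx), norm_neg, norm_smul, norm_eq_abs]
  exact mul_le_mul_of_nonneg_right (hp x hx) (norm_nonneg _)

end FourthOrder

/-- **Lemma (no nontrivial even Dirichlet eigenfunctions for λ ≥ 1).**
If `r > 0`, `λ ≥ 1`, and `v ∈ C⁴([-r,r])` is even and satisfies
`v⁗ + 2v'' + λv = 0` on `(-r,r)` with `v(±r) = v'(±r) = 0`, then `v ≡ 0` on `[-r,r]`. -/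
theorem even_dirichlet_trivial_of_one_le (r lam : ℝ) (hr : 0 < r) (hlam : 1 ≤ lam)
    (v : ℝ → ℝ) (hreg : ContDiffOn ℝ 4 v (Set.Icc (-r) r))
    (heven : ∀ x ∈ Set.Icc (-r) r, v (-x) = v x)
    (hode : ∀ x ∈ Set.Ioo (-r) r,
      iteratedDeriv 4 v x + 2 * iteratedDeriv 2 v x + lam * v x = 0)
    (hbc₁ : v r = 0) (hbc₂ : v (-r) = 0)
    (hbc₃ : derivWithin v (Set.Icc (-r) r) r = 0)
    (hbc₄ : derivWithin v (Set.Icc (-r) r) (-r) = 0) :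
    ∀ x ∈ Set.Icc (-r) r, v x = 0 :=
  even_dirichlet_trivial_of_one_le_general (p := 1) (q := fun _ ↦ lam) (K := 1) (by linarith) hreg
    (by simp) (by simpa using fun _ _ _ ↦ hlam) (by simpa using hode) hbc₂ hbc₁ hbc₄ hbc₃
end

section
/- Let r > 0 and λ ∈ (0,1), and set ν₁ := √(1 − √(1−λ)) and ν₂ := √(1 + √(1−λ)). Then the even Dirichlet problem v⁗ + 2v'' + λv = 0 on (−r,r), v(±r) = v'(±r) = 0, v(−x) = v(x), has a nontrivial solution v ∈ C⁴([−r,r]) if and only if ν₂·sin(ν₂ r)·cos(ν₁ r) − ν₁·cos(ν₂ r)·sin(ν₁ r) = 0. -/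
open Real Set

/-!
An even solution `v` has `v'(0) = v'''(0) = 0`. Factoring the operator as
`(D² + a²)(D² + b²)`, the function `w = v'' + b² v` solves the oscillator equation
`w'' = -a² w` with `w'(0) = 0`, so `w` is a multiple of `cos (a x)`; the same holds with `a` and `b`
exchanged, and subtracting the two shows that `v` is a combination of `cos (a x)` and `cos (b x)`.
The conditions at `r` then form a homogeneous 2 × 2 linear system in the two coefficients, whose
determinant is, up to sign, the characteristic function.
-/

open Matrix Topology

theorem exists_ne_zero_linear_system_two_iff {R : Type*} [CommRing R] [IsDomain R] (p q s t : R) :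
    (∃ A B : R, (A ≠ 0 ∨ B ≠ 0) ∧ p * A + q * B = 0 ∧ s * A + t * B = 0) ↔
      p * t - q * s = 0 := by
  rw [← det_fin_two_of, ← exists_mulVec_eq_zero_iff]
  constructor
  · rintro ⟨A, B, hAB, h₁, h₂⟩
    refine ⟨![A, B], ?_, ?_⟩
    · simpa [funext_iff, Fin.forall_fin_two, imp_iff_not_or] using hAB
    · simpa [funext_iff, Fin.forall_fin_two, mul_comm] using And.intro h₁ h₂
  · rintro ⟨w, hw, hMw⟩
    refine ⟨w 0, w 1, ?_, ?_, ?_⟩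
    · simpa [funext_iff, Fin.forall_fin_two, imp_iff_not_or] using hw
    · simpa [mulVec, dotProduct, Fin.sum_univ_two] using congrFun hMw 0
    · simpa [mulVec, dotProduct, Fin.sum_univ_two] using congrFun hMw 1

section IteratedDeriv

variable {𝕜 F : Type*} [NontriviallyNormedField 𝕜] [NormedAddCommGroup F] [NormedSpace 𝕜 F]

theorem hasDerivAt_iteratedDeriv {f : 𝕜 → F} {x : 𝕜} {n : WithTop ℕ∞} {k : ℕ}
    (hf : ContDiffAt 𝕜 n f x) (hk : k < n) :
    HasDerivAt (iteratedDeriv k f) (iteratedDeriv (k + 1) f x) x := by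
  have hdiff : DifferentiableAt 𝕜 (iteratedDeriv k f) x := by
    rw [iteratedDeriv_eq_equiv_comp]
    exact (LinearIsometryEquiv.differentiable _).differentiableAt.comp x
      (hf.differentiableAt_iteratedFDeriv hk)
  rw [iteratedDeriv_succ]
  exact hdiff.hasDerivAt

theorem iteratedDeriv_zero_eq_zero_of_even [CharZero 𝕜] {f : 𝕜 → F} {k : ℕ} (hk : Odd k)
    (hf : (fun x => f (-x)) =ᶠ[𝓝 0] f) : iteratedDeriv k f 0 = 0 := by
  have hneg : -iteratedDeriv k f 0 = iteratedDeriv k f 0 := by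
    simpa [iteratedDeriv_comp_neg, hk.neg_one_pow] using hf.iteratedDeriv_eq k
  have : IsAddTorsionFree F := .of_isTorsionFree 𝕜 F
  exact neg_eq_self.mp hneg

end IteratedDeriv

section Oscillator

variable {a : ℝ} {u u' : ℝ → ℝ} {s : Set ℝ} {x₀ : ℝ}

theorem eqOn_zero_of_oscillator (hs : IsOpen s) (hs' : IsPreconnected s) (hx₀ : x₀ ∈ s)
    (hu : ∀ x ∈ s, HasDerivAt u (u' x) x) (hu' : ∀ x ∈ s, HasDerivAt u' (-a ^ 2 * u x) x)
    (h₀ : u x₀ = 0) (h₀' : u' x₀ = 0) : EqOn u 0 s := by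
  have eq_of_hasDerivAt_zero {g : ℝ → ℝ} (hg : ∀ x ∈ s, HasDerivAt g 0 x) :
      ∀ x ∈ s, g x = g x₀ := fun x hx =>
    hs.is_const_of_deriv_eq_zero hs'
      (fun y hy => (hg y hy).differentiableAt.differentiableWithinAt)
      (fun y hy => (hg y hy).deriv) hx hx₀
  have energy : ∀ x ∈ s, u' x ^ 2 + a ^ 2 * u x ^ 2 = 0 := fun x hx => by
    have hderiv : ∀ y ∈ s, HasDerivAt (fun y => u' y ^ 2 + a ^ 2 * u y ^ 2) 0 y := fun y hy =>
      (((hu' y hy).pow 2).add (((hu y hy).pow 2).const_mul (a ^ 2))).congr_deriv (by ring)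
    simpa [h₀, h₀'] using eq_of_hasDerivAt_zero hderiv x hx
  have velocity : ∀ x ∈ s, u' x = 0 := fun x hx => by
    nlinarith [energy x hx, sq_nonneg (u' x), sq_nonneg (a * u x)]
  exact fun x hx =>
    (eq_of_hasDerivAt_zero (fun y hy => velocity y hy ▸ hu y hy) x hx).trans h₀

theorem eqOn_mul_cos_of_oscillator (hs : IsOpen s) (hs' : IsPreconnected s) (h0s : 0 ∈ s)
    (hu : ∀ x ∈ s, HasDerivAt u (u' x) x) (hu' : ∀ x ∈ s, HasDerivAt u' (-a ^ 2 * u x) x)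
    (h₀' : u' 0 = 0) : EqOn u (fun x => u 0 * cos (a * x)) s := by
  have hcos (x : ℝ) : HasDerivAt (fun x => u 0 * cos (a * x)) (-(u 0 * a * sin (a * x))) x :=
    (((hasDerivAt_id x).const_mul a).cos.const_mul (u 0)).congr_deriv (by simp; ring)
  have hsin (x : ℝ) : HasDerivAt (fun x => -(u 0 * a * sin (a * x)))
      (-a ^ 2 * (u 0 * cos (a * x))) x :=
    (((hasDerivAt_id x).const_mul a).sin.const_mul (u 0 * a)).neg.congr_deriv (by simp; ring)
  have hdiff : EqOn (fun x => u x - u 0 * cos (a * x)) 0 s :=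
    eqOn_zero_of_oscillator (a := a) hs hs' h0s (fun x hx => (hu x hx).sub (hcos x))
      (fun x hx => ((hu' x hx).sub (hsin x)).congr_deriv (by ring)) (by simp) (by simp [h₀'])
  exact fun x hx => sub_eq_zero.mp (hdiff hx)

end Oscillator

/-- The combination `A cos (a x) + B cos (b x)`: the general even solution of
`v⁗ + (a² + b²) v'' + a² b² v = 0` when `a² ≠ b²`. -/
noncomputable def cosPair (a b A B x : ℝ) : ℝ :=
  A * cos (a * x) + B * cos (b * x)

/-- The nontrivial even solutions on `[-r, r]` of the Dirichlet problem `v⁗ + p v'' + q v = 0`,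
`v(±r) = v'(±r) = 0`. Derivatives at the endpoints are one-sided. -/
structure IsNontrivialEvenDirichletSolution (p q r : ℝ) (v : ℝ → ℝ) : Prop where
  contDiffOn : ContDiffOn ℝ 4 v (Icc (-r) r)
  nontrivial : ∃ x ∈ Icc (-r) r, v x ≠ 0
  even : ∀ x ∈ Icc (-r) r, v (-x) = v x
  ode : ∀ x ∈ Ioo (-r) r, iteratedDeriv 4 v x + p * iteratedDeriv 2 v x + q * v x = 0
  right : v r = 0
  left : v (-r) = 0
  derivWithin_right : derivWithin v (Icc (-r) r) r = 0
  derivWithin_left : derivWithin v (Icc (-r) r) (-r) = 0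

section CosPair

variable (a b A B : ℝ)

theorem contDiff_cosPair {n : WithTop ℕ∞} : ContDiff ℝ n (cosPair a b A B) := by
  unfold cosPair
  fun_prop

theorem cosPair_neg (x : ℝ) : cosPair a b A B (-x) = cosPair a b A B x := by
  simp [cosPair]

theorem deriv_cosPair (x : ℝ) :
    deriv (cosPair a b A B) x = -(a * sin (a * x)) * A + -(b * sin (b * x)) * B := by
  have hcos (c C : ℝ) : HasDerivAt (fun x => C * cos (c * x)) (-(c * sin (c * x)) * C) x :=
    (((hasDerivAt_id x).const_mul c).cos.const_mul C).congr_deriv (by simp; ring)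
  exact ((hcos a A).add (hcos b B)).deriv

theorem iteratedDeriv_even_cosPair (n : ℕ) :
    iteratedDeriv (2 * n) (cosPair a b A B) =
      cosPair a b ((-a ^ 2) ^ n * A) ((-b ^ 2) ^ n * B) := by
  have hcos (c C x : ℝ) :
      iteratedDeriv (2 * n) (fun x => C * cos (c * x)) x = (-c ^ 2) ^ n * C * cos (c * x) := by
    rw [iteratedDeriv_const_mul_field, iteratedDeriv_comp_const_mul contDiff_cos,
      iteratedDeriv_even_cos, neg_pow (c ^ 2), ← pow_mul]
    simp only [Pi.mul_apply, Pi.pow_apply, Pi.neg_apply, Pi.one_apply]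
    ring
  funext x
  unfold cosPair
  rw [iteratedDeriv_fun_add (by fun_prop) (by fun_prop), hcos, hcos]

variable {a b A B}

theorem cosPair_eventuallyEq_zero_iff (hab : a ^ 2 ≠ b ^ 2) :
    cosPair a b A B =ᶠ[𝓝 0] 0 ↔ A = 0 ∧ B = 0 := by
  refine ⟨fun h => ?_, ?_⟩
  · have value : A + B = 0 := by simpa [cosPair] using h.eq_of_nhds
    have second : a ^ 2 * A + b ^ 2 * B = 0 := by
      have := h.iteratedDeriv_eq (2 * 1)
      rw [iteratedDeriv_even_cosPair] at this
      simp only [cosPair, iteratedDeriv_const_zero, mul_zero, cos_zero, pow_one] at this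
      linear_combination -this
    have hmul : (a ^ 2 - b ^ 2) * A = 0 := by linear_combination second - b ^ 2 * value
    have hA : A = 0 := (mul_eq_zero.mp hmul).resolve_left (sub_ne_zero.mpr hab)
    exact ⟨hA, by simpa [hA] using value⟩
  · rintro ⟨rfl, rfl⟩
    exact .of_forall fun x => by simp [cosPair]

end CosPair

section QuarticODE

variable {a b p q r : ℝ} {v : ℝ → ℝ}

theorem iteratedDeriv_two_add_eqOn_mul_cos {s : Set ℝ} (hs : IsOpen s) (hs' : IsPreconnected s)
    (h0s : 0 ∈ s) (hp : a ^ 2 + b ^ 2 = p) (hq : a ^ 2 * b ^ 2 = q) (hv : ContDiffOn ℝ 4 v s)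
    (h₁ : iteratedDeriv 1 v 0 = 0) (h₃ : iteratedDeriv 3 v 0 = 0)
    (hode : ∀ x ∈ s, iteratedDeriv 4 v x + p * iteratedDeriv 2 v x + q * v x = 0) :
    EqOn (fun x => iteratedDeriv 2 v x + b ^ 2 * v x)
      (fun x => (iteratedDeriv 2 v 0 + b ^ 2 * v 0) * cos (a * x)) s := by
  have hasDeriv (k : ℕ) (hk : k < 4) (x : ℝ) (hx : x ∈ s) :
      HasDerivAt (iteratedDeriv k v) (iteratedDeriv (k + 1) v x) x :=
    hasDerivAt_iteratedDeriv (hv.contDiffAt (hs.mem_nhds hx)) (by exact_mod_cast hk)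
  refine eqOn_mul_cos_of_oscillator
    (u' := fun x => iteratedDeriv 3 v x + b ^ 2 * iteratedDeriv 1 v x) hs hs' h0s ?_ ?_
    (by simp [h₁, h₃])
  · intro x hx
    have hv' : HasDerivAt v (iteratedDeriv 1 v x) x := by
      simpa only [iteratedDeriv_zero] using hasDeriv 0 (by norm_num) x hx
    exact (hasDeriv 2 (by norm_num) x hx).add (hv'.const_mul _)
  · intro x hx
    refine ((hasDeriv 3 (by norm_num) x hx).add
      ((hasDeriv 1 (by norm_num) x hx).const_mul _)).congr_deriv ?_
    linear_combination hode x hx + iteratedDeriv 2 v x * hp + v x * hq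

theorem exists_eqOn_cosPair_of_quartic_ode {s : Set ℝ} (hs : IsOpen s) (hs' : IsPreconnected s)
    (h0s : 0 ∈ s) (hp : a ^ 2 + b ^ 2 = p) (hq : a ^ 2 * b ^ 2 = q) (hab : a ^ 2 ≠ b ^ 2)
    (hv : ContDiffOn ℝ 4 v s) (heven : (fun x => v (-x)) =ᶠ[𝓝 0] v)
    (hode : ∀ x ∈ s, iteratedDeriv 4 v x + p * iteratedDeriv 2 v x + q * v x = 0) :
    ∃ A B : ℝ, EqOn v (cosPair a b A B) s := by
  have h₁ : iteratedDeriv 1 v 0 = 0 := iteratedDeriv_zero_eq_zero_of_even (by decide) heven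
  have h₃ : iteratedDeriv 3 v 0 = 0 := iteratedDeriv_zero_eq_zero_of_even (by decide) heven
  have along_a := iteratedDeriv_two_add_eqOn_mul_cos hs hs' h0s hp hq hv h₁ h₃ hode
  have along_b := iteratedDeriv_two_add_eqOn_mul_cos hs hs' h0s ((add_comm _ _).trans hp)
    ((mul_comm _ _).trans hq) hv h₁ h₃ hode
  refine ⟨(iteratedDeriv 2 v 0 + b ^ 2 * v 0) / (b ^ 2 - a ^ 2),
    -(iteratedDeriv 2 v 0 + a ^ 2 * v 0) / (b ^ 2 - a ^ 2), fun x hx => ?_⟩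
  have hba : b ^ 2 - a ^ 2 ≠ 0 := sub_ne_zero.mpr hab.symm
  rw [cosPair, div_mul_eq_mul_div, div_mul_eq_mul_div, ← add_div, eq_div_iff hba]
  linear_combination along_a hx - along_b hx

end QuarticODE

namespace IsNontrivialEvenDirichletSolution

variable {a b p q r A B : ℝ} {v w : ℝ → ℝ}

theorem congr (hv : IsNontrivialEvenDirichletSolution p q r v) (hr : 0 < r)
    (h : EqOn v w (Icc (-r) r)) :
    IsNontrivialEvenDirichletSolution p q r w where
  contDiffOn := hv.contDiffOn.congr h.symm
  nontrivial := by
    obtain ⟨x, hx, hvx⟩ := hv.nontrivial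
    exact ⟨x, hx, h hx ▸ hvx⟩
  even x hx := by
    rw [← h hx, ← h (by simpa [and_comm, neg_le] using hx), hv.even x hx]
  ode x hx := by
    have hIoo : EqOn v w (Ioo (-r) r) := h.mono Ioo_subset_Icc_self
    rw [← hIoo.iteratedDeriv_of_isOpen isOpen_Ioo 4 hx,
      ← hIoo.iteratedDeriv_of_isOpen isOpen_Ioo 2 hx, ← hIoo hx, hv.ode x hx]
  right := h (right_mem_Icc.mpr (by linarith)) ▸ hv.right
  left := h (left_mem_Icc.mpr (by linarith)) ▸ hv.left
  derivWithin_right := by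
    rw [← derivWithin_congr h (h (right_mem_Icc.mpr (by linarith))), hv.derivWithin_right]
  derivWithin_left := by
    rw [← derivWithin_congr h (h (left_mem_Icc.mpr (by linarith))), hv.derivWithin_left]

theorem exists_eqOn_cosPair (hv : IsNontrivialEvenDirichletSolution p q r v) (hr : 0 < r)
    (hp : a ^ 2 + b ^ 2 = p) (hq : a ^ 2 * b ^ 2 = q) (hab : a ^ 2 ≠ b ^ 2) :
    ∃ A B : ℝ, EqOn v (cosPair a b A B) (Icc (-r) r) := by
  have hneg : -r < 0 := neg_lt_zero.mpr hr
  have heven : (fun x => v (-x)) =ᶠ[𝓝 0] v := by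
    filter_upwards [Icc_mem_nhds hneg hr] using hv.even
  obtain ⟨A, B, h⟩ := exists_eqOn_cosPair_of_quartic_ode isOpen_Ioo isPreconnected_Ioo
    ⟨hneg, hr⟩ hp hq hab (hv.contDiffOn.mono Ioo_subset_Icc_self) heven hv.ode
  exact ⟨A, B, h.of_subset_closure hv.contDiffOn.continuousOn
    (contDiff_cosPair a b A B (n := 0)).continuous.continuousOn Ioo_subset_Icc_self
    (closure_Ioo (hneg.trans hr).ne).ge⟩

theorem cosPair_iff (hr : 0 < r) (hp : a ^ 2 + b ^ 2 = p) (hq : a ^ 2 * b ^ 2 = q)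
    (hab : a ^ 2 ≠ b ^ 2) :
    IsNontrivialEvenDirichletSolution p q r (cosPair a b A B) ↔
      (A ≠ 0 ∨ B ≠ 0) ∧ cos (a * r) * A + cos (b * r) * B = 0 ∧
        -(a * sin (a * r)) * A + -(b * sin (b * r)) * B = 0 := by
  have hneg : -r < 0 := neg_lt_zero.mpr hr
  have derivWithin_eq : ∀ x ∈ Icc (-r) r, derivWithin (cosPair a b A B) (Icc (-r) r) x =
      -(a * sin (a * x)) * A + -(b * sin (b * x)) * B := fun x hx => by
    rw [← deriv_cosPair, ((contDiff_cosPair a b A B).differentiable one_ne_zero x).derivWithin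
      (uniqueDiffOn_Icc (hneg.trans hr) x hx)]
  have hright : r ∈ Icc (-r) r := right_mem_Icc.mpr (hneg.trans hr).le
  have hleft : -r ∈ Icc (-r) r := left_mem_Icc.mpr (hneg.trans hr).le
  constructor
  · intro hv
    refine ⟨?_, ?_, (derivWithin_eq r hright).symm.trans hv.derivWithin_right⟩
    · obtain ⟨x, -, hx⟩ := hv.nontrivial
      contrapose! hx
      simp [cosPair, hx]
    · have hzero := hv.right
      rw [cosPair] at hzero
      linear_combination hzero
  · rintro ⟨hAB, hvalue, hderiv⟩
    have hzero : cosPair a b A B r = 0 := by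
      rw [cosPair]
      linear_combination hvalue
    exact
      { contDiffOn := (contDiff_cosPair a b A B).contDiffOn
        nontrivial := by
          contrapose! hAB
          refine (cosPair_eventuallyEq_zero_iff hab).mp ?_
          filter_upwards [Icc_mem_nhds hneg hr] using hAB
        even := fun x _ => cosPair_neg a b A B x
        ode := fun x _ => by
          rw [iteratedDeriv_even_cosPair a b A B 2, iteratedDeriv_even_cosPair a b A B 1, ← hp,
            ← hq]
          simp only [cosPair]
          ring
        right := hzero
        left := by rw [cosPair_neg, hzero]
        derivWithin_right := by rw [derivWithin_eq r hright, hderiv]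
        derivWithin_left := by
          rw [derivWithin_eq (-r) hleft]
          simp only [mul_neg, sin_neg]
          linear_combination -hderiv }

end IsNontrivialEvenDirichletSolution

theorem even_dirichlet_characteristic_general {a b p q r : ℝ} (hr : 0 < r)
    (hp : a ^ 2 + b ^ 2 = p) (hq : a ^ 2 * b ^ 2 = q) (hab : a ^ 2 ≠ b ^ 2) :
    (∃ v, IsNontrivialEvenDirichletSolution p q r v) ↔
      b * sin (b * r) * cos (a * r) - a * cos (b * r) * sin (a * r) = 0 := by
  calc (∃ v, IsNontrivialEvenDirichletSolution p q r v)
      ↔ ∃ A B, IsNontrivialEvenDirichletSolution p q r (cosPair a b A B) := by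
        refine ⟨fun ⟨v, hv⟩ => ?_, fun ⟨A, B, h⟩ => ⟨_, h⟩⟩
        obtain ⟨A, B, h⟩ := hv.exists_eqOn_cosPair hr hp hq hab
        exact ⟨A, B, hv.congr hr h⟩
    _ ↔ cos (a * r) * -(b * sin (b * r)) - cos (b * r) * -(a * sin (a * r)) = 0 := by
        simp only [IsNontrivialEvenDirichletSolution.cosPair_iff hr hp hq hab,
          exists_ne_zero_linear_system_two_iff]
    _ ↔ b * sin (b * r) * cos (a * r) - a * cos (b * r) * sin (a * r) = 0 := by
        rw [← neg_eq_zero]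
        ring_nf

theorem sq_sqrt_one_sub_sqrt {lam : ℝ} (hlam : 0 ≤ lam) :
    √(1 - √(1 - lam)) ^ 2 = 1 - √(1 - lam) :=
  sq_sqrt (sub_nonneg.mpr (sqrt_le_one.mpr (by linarith)))

theorem sq_sqrt_one_add_sqrt (lam : ℝ) : √(1 + √(1 - lam)) ^ 2 = 1 + √(1 - lam) :=
  sq_sqrt (by positivity)

/-- **Lemma (characteristic equation of the even Dirichlet problem).** For `r > 0` and
`λ ∈ (0,1)`, with `ν₁ = √(1 - √(1-λ))` and `ν₂ = √(1 + √(1-λ))`, the problem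
`v⁗ + 2v'' + λv = 0` on `(-r,r)`, `v(±r) = v'(±r) = 0`, `v` even, has a nontrivial
solution `v ∈ C⁴([-r,r])` iff `ν₂ sin(ν₂r) cos(ν₁r) - ν₁ cos(ν₂r) sin(ν₁r) = 0`. -/
theorem even_dirichlet_characteristic (r lam ν₁ ν₂ : ℝ) (hr : 0 < r)
    (hlam₁ : 0 < lam) (hlam₂ : lam < 1)
    (hν₁ : ν₁ = Real.sqrt (1 - Real.sqrt (1 - lam)))
    (hν₂ : ν₂ = Real.sqrt (1 + Real.sqrt (1 - lam))) :
    (∃ v : ℝ → ℝ, ContDiffOn ℝ 4 v (Set.Icc (-r) r) ∧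
      (∃ x ∈ Set.Icc (-r) r, v x ≠ 0) ∧
      (∀ x ∈ Set.Icc (-r) r, v (-x) = v x) ∧
      (∀ x ∈ Set.Ioo (-r) r,
        iteratedDeriv 4 v x + 2 * iteratedDeriv 2 v x + lam * v x = 0) ∧
      v r = 0 ∧ v (-r) = 0 ∧
      derivWithin v (Set.Icc (-r) r) r = 0 ∧ derivWithin v (Set.Icc (-r) r) (-r) = 0)
    ↔ ν₂ * Real.sin (ν₂ * r) * Real.cos (ν₁ * r)
        - ν₁ * Real.cos (ν₂ * r) * Real.sin (ν₁ * r) = 0 := by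
  subst hν₁ hν₂
  have hs : 0 < √(1 - lam) := sqrt_pos.mpr (sub_pos.mpr hlam₂)
  have hs' : √(1 - lam) ^ 2 = 1 - lam := sq_sqrt (sub_pos.mpr hlam₂).le
  have h₁ := sq_sqrt_one_sub_sqrt hlam₁.le
  have h₂ := sq_sqrt_one_add_sqrt lam
  rw [← even_dirichlet_characteristic_general (p := 2) (q := lam) hr
    (by rw [h₁, h₂]; ring) (by rw [h₁, h₂]; linear_combination -hs') (by rw [h₁, h₂]; linarith)]
  exact exists_congr fun v =>
    ⟨fun ⟨hC, hne, heven, hode, hright, hleft, hright', hleft'⟩ =>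
      ⟨hC, hne, heven, hode, hright, hleft, hright', hleft'⟩,
    fun ⟨hC, hne, heven, hode, hright, hleft, hright', hleft'⟩ =>
      ⟨hC, hne, heven, hode, hright, hleft, hright', hleft'⟩⟩
end

section
/- Define g(u) := u·(u² + 3) + (u² − 3)·(u² + 1)·arctan u. Then g(u) > 0 for all u > 0. Consequently, G(p,x) := (px²+1)²·(√p·x·(px²+3) + (px²−3)(px²+1)·arctan(√p·x)) / (4·p^{5/2}·x²) satisfies G(p,x) > 0 for all p, x > 0. -/
open Real

noncomputable section

/-- `g(u) = u(u² + 3) + (u² - 3)(u² + 1) arctan u`. -/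
def gfun (u : ℝ) : ℝ :=
  u * (u ^ 2 + 3) + (u ^ 2 - 3) * (u ^ 2 + 1) * Real.arctan u

/-- `G(p,x)` from Lemma 5.4. -/
def Gfun (p x : ℝ) : ℝ :=
  ((p * x ^ 2 + 1) ^ 2 *
    (Real.sqrt p * x * (p * x ^ 2 + 3) +
      (p * x ^ 2 - 3) * (p * x ^ 2 + 1) * Real.arctan (Real.sqrt p * x))) /
    (4 * Real.sqrt (p ^ 5) * x ^ 2)

/-! The derivative `g'(u) = 4u((u - arctan u) + u² arctan u)` is positive for `u > 0`, because
`0 < arctan u < u` there, and `g(0) = 0`. The value `G(p, x)` is a positive multiple of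
`g(√p x)`. -/

theorem arctan_lt_self {u : ℝ} (hu : 0 < u) : arctan u < u :=
  calc
    arctan u < tan (arctan u) := lt_tan (arctan_pos.2 hu) (arctan_lt_pi_div_two u)
    _ = u := tan_arctan u

theorem gfun_zero : gfun 0 = 0 := by
  simp [gfun]

theorem hasDerivAt_gfun (u : ℝ) :
    HasDerivAt gfun (4 * u * ((u - arctan u) + u ^ 2 * arctan u)) u := by
  have hsq : HasDerivAt (fun v : ℝ => v ^ 2) (2 * u) u := by
    simpa using hasDerivAt_pow 2 u
  have hpoly := (hasDerivAt_id' u).fun_mul (hsq.add_const 3)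
  have harctan := ((hsq.sub_const 3).fun_mul (hsq.add_const 1)).fun_mul (hasDerivAt_arctan u)
  refine (hpoly.fun_add harctan).congr_deriv ?_
  field_simp
  ring

theorem strictMonoOn_gfun : StrictMonoOn gfun (Set.Ici 0) := by
  refine strictMonoOn_of_hasDerivWithinAt_pos (convex_Ici 0)
    (fun u _ => (hasDerivAt_gfun u).continuousAt.continuousWithinAt)
    (fun u _ => (hasDerivAt_gfun u).hasDerivWithinAt) fun u hu => ?_
  have hu : 0 < u := by simpa only [interior_Ici, Set.mem_Ioi] using hu
  have hsub : 0 < u - arctan u := sub_pos.2 (arctan_lt_self hu)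
  positivity

theorem gfun_pos {u : ℝ} (hu : 0 < u) : 0 < gfun u :=
  calc
    0 = gfun 0 := gfun_zero.symm
    _ < gfun u := strictMonoOn_gfun Set.self_mem_Ici hu.le hu

theorem Gfun_eq_mul_gfun {p : ℝ} (hp : 0 ≤ p) (x : ℝ) :
    Gfun p x = (p * x ^ 2 + 1) ^ 2 / (4 * √(p ^ 5) * x ^ 2) * gfun (√p * x) := by
  rw [Gfun, gfun, mul_pow, sq_sqrt hp, mul_div_right_comm]

theorem Gfun_pos {p x : ℝ} (hp : 0 < p) (hx : 0 < x) : 0 < Gfun p x := by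
  rw [Gfun_eq_mul_gfun hp.le]
  have hgfun : 0 < gfun (√p * x) := gfun_pos (mul_pos (sqrt_pos.2 hp) hx)
  positivity

/-- **Positivity of `g` and `G`.** `g(u) > 0` for all `u > 0`, and consequently
`G(p,x) > 0` for all `p, x > 0`. -/
theorem gfun_pos_and_Gfun_pos :
    (∀ u : ℝ, 0 < u → 0 < gfun u) ∧ ∀ p x : ℝ, 0 < p → 0 < x → 0 < Gfun p x :=
  ⟨fun _ => gfun_pos, fun _ _ => Gfun_pos⟩

end
end

section
/- Define 𝒬(s) := (2s + 1)/(s³(s + 2)) for s > 0, ℬ*(s) := (5/18)·s·(s + 2) for s > 0, and P(α) := (675·α + 125 + √(125·(18α + 5)³)) / (2916·α²) for α > 0. Then 𝒬 is strictly decreasing on (0,+∞) and maps (0,+∞) onto (0,+∞), and for every s > 0 the identity P(𝒬(s)·ℬ*(s)) = ℬ*(s) holds; in particular, the graph of P coincides with the parametrized curve {(𝒬(s)·ℬ*(s), ℬ*(s)) : s > 0}. -/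
open Real Set

noncomputable section

/-- `𝒬(s) = (2s+1)/(s³(s+2))`. -/
def Qc (s : ℝ) : ℝ := (2 * s + 1) / (s ^ 3 * (s + 2))

/-- `ℬ*(s) = (5/18)s(s+2)`. -/
def Bstar (s : ℝ) : ℝ := (5 / 18) * s * (s + 2)

/-- `P(α) = (675α + 125 + √(125(18α+5)³)) / (2916α²)`. -/
def Pfun (α : ℝ) : ℝ :=
  (675 * α + 125 + Real.sqrt (125 * (18 * α + 5) ^ 3)) / (2916 * α ^ 2)

/-!
The identity `𝒬(s)ℬ*(s) = ℬ*(1/s)` exhibits the curve as `s ↦ (ℬ*(1/s), ℬ*(s))`, so everything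
reduces to the quadratic `ℬ*`, an increasing bijection of `(0,∞)`. In the parameter `t = 1/s` one
has `18ℬ*(t) + 5 = 5(t+1)²`, so the radicand of `P(ℬ*(t))` is a perfect square and
`P(ℬ*(t)) = ℬ*(1/t)`. Monotonicity and limits of `𝒬(s) = ℬ*(1/s)/ℬ*(s)` are read off from `ℬ*`.
-/

open Filter Topology

lemma eighteen_mul_Bstar_add_five (s : ℝ) : 18 * Bstar s + 5 = 5 * (s + 1) ^ 2 := by
  unfold Bstar
  ring

lemma Bstar_pos {s : ℝ} (hs : 0 < s) : 0 < Bstar s := by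
  unfold Bstar
  positivity

lemma continuous_Bstar : Continuous Bstar := by
  unfold Bstar
  fun_prop

lemma strictMonoOn_Bstar : StrictMonoOn Bstar (Ici (-1)) := by
  intro s hs t _ hst
  have hs' : 0 ≤ s + 1 := neg_le_iff_add_nonneg.mp hs
  have hsq : (s + 1) ^ 2 < (t + 1) ^ 2 := by gcongr
  linarith [eighteen_mul_Bstar_add_five s, eighteen_mul_Bstar_add_five t]

lemma tendsto_Bstar_atTop : Tendsto Bstar atTop atTop :=
  (tendsto_id.const_mul_atTop (by norm_num)).atTop_mul_atTop₀
    (tendsto_atTop_add_const_right _ _ tendsto_id)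

lemma tendsto_Bstar_nhdsGT_zero : Tendsto Bstar (𝓝[>] 0) (𝓝[>] 0) := by
  refine tendsto_nhdsWithin_iff.mpr ⟨?_, eventually_mem_nhdsWithin.mono fun _ => Bstar_pos⟩
  simpa only [Bstar, mul_zero, zero_mul] using
    (continuous_Bstar.tendsto 0).mono_left nhdsWithin_le_nhds

lemma image_Bstar_Ioi : Bstar '' Ioi 0 = Ioi 0 :=
  (image_subset_iff.mpr fun _ => Bstar_pos).antisymm <|
    isPreconnected_Ioi.intermediate_value_Ioi
      (le_principal_iff.mpr self_mem_nhdsWithin) (le_principal_iff.mpr (Ioi_mem_atTop 0))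
      continuous_Bstar.continuousOn
      (tendsto_nhds_of_tendsto_nhdsWithin tendsto_Bstar_nhdsGT_zero) tendsto_Bstar_atTop

lemma Pfun_Bstar {t : ℝ} (ht : 0 < t) : Pfun (Bstar t) = Bstar t⁻¹ := by
  have hsqrt : √(125 * (18 * Bstar t + 5) ^ 3) = 125 * (t + 1) ^ 3 := by
    rw [eighteen_mul_Bstar_add_five, sqrt_eq_iff_mul_self_eq_of_pos (by positivity)]
    ring
  rw [Pfun, hsqrt]
  unfold Bstar
  field_simp
  ring

lemma Qc_mul_Bstar {s : ℝ} (hs : 0 < s) : Qc s * Bstar s = Bstar s⁻¹ := by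
  unfold Qc Bstar
  field_simp
  ring

lemma Qc_eq_div {s : ℝ} (hs : 0 < s) : Qc s = Bstar s⁻¹ / Bstar s :=
  eq_div_of_mul_eq (Bstar_pos hs).ne' (Qc_mul_Bstar hs)

lemma Qc_pos {s : ℝ} (hs : 0 < s) : 0 < Qc s := by
  unfold Qc
  positivity

lemma continuousOn_Qc : ContinuousOn Qc (Ioi 0) := by
  have hden : ∀ s ∈ Ioi (0 : ℝ), s ^ 3 * (s + 2) ≠ 0 := by
    intro s (hs : 0 < s)
    positivity
  exact ContinuousOn.div (by fun_prop) (by fun_prop) hden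

lemma strictAntiOn_Qc : StrictAntiOn Qc (Ioi 0) := by
  intro s (hs : 0 < s) t (ht : 0 < t) hst
  have hmono : StrictMonoOn Bstar (Ioi 0) :=
    strictMonoOn_Bstar.mono (Ioi_subset_Ici (by norm_num))
  have hnum : Bstar t⁻¹ < Bstar s⁻¹ :=
    hmono (inv_pos.mpr ht) (inv_pos.mpr hs) (inv_strictAnti₀ hs hst)
  rw [Qc_eq_div hs, Qc_eq_div ht]
  exact div_lt_div₀ hnum (hmono hs ht hst).le (Bstar_pos (inv_pos.mpr hs)).le (Bstar_pos hs)

lemma tendsto_Qc_atTop : Tendsto Qc atTop (𝓝 0) := by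
  have hnum : Tendsto (fun s : ℝ => Bstar s⁻¹) atTop (𝓝 0) :=
    (tendsto_nhds_of_tendsto_nhdsWithin tendsto_Bstar_nhdsGT_zero).comp
      tendsto_inv_atTop_nhdsGT_zero
  exact (hnum.div_atTop tendsto_Bstar_atTop).congr'
    ((eventually_gt_atTop 0).mono fun _ hs => (Qc_eq_div hs).symm)

lemma tendsto_Qc_nhdsGT_zero : Tendsto Qc (𝓝[>] 0) atTop := by
  have hnum : Tendsto (fun s : ℝ => Bstar s⁻¹) (𝓝[>] 0) atTop :=
    tendsto_Bstar_atTop.comp tendsto_inv_nhdsGT_zero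
  have hden : Tendsto (fun s : ℝ => (Bstar s)⁻¹) (𝓝[>] 0) atTop :=
    tendsto_inv_nhdsGT_zero.comp tendsto_Bstar_nhdsGT_zero
  exact (hnum.atTop_mul_atTop₀ hden).congr'
    (eventually_mem_nhdsWithin.mono fun _ hs => (Qc_eq_div hs).symm)

lemma image_Qc_Ioi : Qc '' Ioi 0 = Ioi 0 :=
  (image_subset_iff.mpr fun _ => Qc_pos).antisymm <|
    isPreconnected_Ioi.intermediate_value_Ioi
      (le_principal_iff.mpr (Ioi_mem_atTop 0)) (le_principal_iff.mpr self_mem_nhdsWithin)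
      continuousOn_Qc tendsto_Qc_atTop tendsto_Qc_nhdsGT_zero

lemma Pfun_Qc_mul_Bstar {s : ℝ} (hs : 0 < s) : Pfun (Qc s * Bstar s) = Bstar s := by
  rw [Qc_mul_Bstar hs, Pfun_Bstar (inv_pos.mpr hs), inv_inv]

lemma exists_Qc_mul_Bstar_eq {α : ℝ} (hα : 0 < α) : ∃ s, 0 < s ∧ Qc s * Bstar s = α := by
  obtain ⟨t, ht, rfl⟩ : α ∈ Bstar '' Ioi 0 := image_Bstar_Ioi.symm ▸ hα
  exact ⟨t⁻¹, inv_pos.mpr ht, by rw [Qc_mul_Bstar (inv_pos.mpr ht), inv_inv]⟩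

/-- **Remark (envelope description of `P`).** `𝒬` is strictly decreasing on `(0,∞)` and maps
`(0,∞)` onto `(0,∞)`; for every `s > 0`, `P(𝒬(s)ℬ*(s)) = ℬ*(s)`; hence the graph of `P`
over `(0,∞)` is the parametrized curve `{(𝒬(s)ℬ*(s), ℬ*(s)) : s > 0}`. -/
theorem Pfun_envelope_description :
    StrictAntiOn Qc (Set.Ioi 0) ∧
    Qc '' Set.Ioi 0 = Set.Ioi 0 ∧
    (∀ s : ℝ, 0 < s → Pfun (Qc s * Bstar s) = Bstar s) ∧
    {p : ℝ × ℝ | 0 < p.1 ∧ p.2 = Pfun p.1}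
      = {p : ℝ × ℝ | ∃ s : ℝ, 0 < s ∧ p = (Qc s * Bstar s, Bstar s)} := by
  refine ⟨strictAntiOn_Qc, image_Qc_Ioi, fun _ => Pfun_Qc_mul_Bstar, ?_⟩
  ext ⟨α, β⟩
  constructor
  · rintro ⟨hα : 0 < α, hβ : β = Pfun α⟩
    obtain ⟨s, hs, rfl⟩ := exists_Qc_mul_Bstar_eq hα
    exact ⟨s, hs, Prod.ext rfl (hβ.trans (Pfun_Qc_mul_Bstar hs))⟩
  · rintro ⟨s, hs, ⟨⟩⟩
    exact ⟨mul_pos (Qc_pos hs) (Bstar_pos hs), (Pfun_Qc_mul_Bstar hs).symm⟩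

end
end
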